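/- Let k ≥ 2 be an integer. For any fixed x ≥ 2 and T ≥ 1, the integral of (ζ(s−1)/ζ(s))·x^s/s^k over the straight-line segment from −(2M+1) − iT to −(2M+1) + iT tends to 0 as M tends to infinity through the nonnegative integers. -/

import Mathlib

open Complex Filter Topology intervalIntegral

noncomputable section

/-- On the half-plane `2 ≤ re w`, the zeta function is within `ζ(2) - 1 < 7 / 10` of `1`. -/
lemma norm_riemannZeta_sub_one_le {w : ℂ} (hw : 2 ≤ w.re) : ‖riemannZeta w - 1‖ ≤ 7 / 10 := by
  have hw1 : 1 < w.re := by linarith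
  have hz : HasSum (fun n : ℕ => 1 / (n : ℂ) ^ w) (riemannZeta w) := by
    rw [zeta_eq_tsum_one_div_nat_cpow hw1]
    exact (Complex.summable_one_div_nat_cpow.mpr hw1).hasSum
  have hw0 : w ≠ 0 := by rintro rfl; norm_num at hw
  have hz' := (hasSum_nat_add_iff' 2).mpr hz
  have h2 := (hasSum_nat_add_iff' 2).mpr hasSum_zeta_two
  simp only [Finset.sum_range_succ, Finset.sum_range_zero, Nat.cast_zero, Nat.cast_one,
    zero_cpow hw0, one_cpow, div_zero, div_one, zero_add, zero_pow two_ne_zero, one_pow] at hz' h2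
  rw [← hz'.tsum_eq]
  refine (tsum_of_norm_bounded h2 fun n => ?_).trans ?_
  · rw [norm_div, norm_one, norm_natCast_cpow_of_pos (by omega), ← Real.rpow_natCast]
    have h1 : (1 : ℝ) ≤ ((n + 2 : ℕ) : ℝ) := by exact_mod_cast (by omega : 1 ≤ n + 2)
    gcongr
    exact_mod_cast hw
  · nlinarith [Real.pi_lt_d2, Real.pi_pos]

/-- The functional equation applied to both factors of `ζ(s - 1) / ζ(s)`, where `s = 1 - w`. -/
lemma riemannZeta_neg_div_riemannZeta_one_sub {w : ℂ} (hw : 1 < w.re) :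
    riemannZeta (-w) / riemannZeta (1 - w) =
      -(w / (2 * Real.pi)) * (sin (Real.pi * w / 2) / cos (Real.pi * w / 2)) *
        (riemannZeta (w + 1) / riemannZeta w) := by
  have hn : ∀ v : ℂ, 1 < v.re → (∀ n : ℕ, v ≠ -n) ∧ v ≠ 1 := by
    refine fun v hv => ⟨fun n h => ?_, fun h => ?_⟩
    · have : (0 : ℝ) ≤ n := n.cast_nonneg
      rw [h] at hv
      simp only [neg_re, natCast_re] at hv
      linarith
    · simp [h] at hv
  have hw' : 1 < (w + 1).re := by simp only [add_re, one_re]; linarith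
  have hw0 : w ≠ 0 := by rintro rfl; norm_num at hw
  have hpi : (2 * Real.pi : ℂ) ≠ 0 := by simp [Real.pi_ne_zero]
  have e : -w = 1 - (w + 1) := by ring
  have hc : cos (Real.pi * (w + 1) / 2) = -sin (Real.pi * w / 2) := by
    rw [← Complex.cos_add_pi_div_two]; congr 1; ring
  rw [e, riemannZeta_one_sub (hn _ hw').1 (hn _ hw').2, riemannZeta_one_sub (hn _ hw).1 (hn _ hw).2,
    Gamma_add_one _ hw0, hc, show -(w + 1) = -w + -1 by ring, cpow_add _ _ hpi, cpow_neg_one]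
  have hG : Gamma w ≠ 0 := Gamma_ne_zero_of_re_pos (by linarith)
  have hP : (2 * Real.pi : ℂ) ^ (-w) ≠ 0 := by simp [cpow_eq_zero_iff, hpi]
  generalize Gamma w = G at *
  generalize (2 * Real.pi : ℂ) ^ (-w) = P at *
  have h2 : (2 : ℂ) * P * G ≠ 0 := by simp [hP, hG]
  calc _ = (2 * P * G) * (-(w * (2 * Real.pi : ℂ)⁻¹) * sin (Real.pi * w / 2) * riemannZeta (w + 1))
        / ((2 * P * G) * (cos (Real.pi * w / 2) * riemannZeta w)) := by ring
    _ = _ := by rw [mul_div_mul_left _ _ h2]; ring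

/-- `|tan| ≤ 1` on vertical lines through integer multiples of `π`. -/
lemma norm_sin_div_cos_nat_mul_pi_add_mul_I_le_one (n : ℕ) (y : ℝ) :
    ‖sin (n * Real.pi + y * I) / cos (n * Real.pi + y * I)‖ ≤ 1 := by
  have hs : sin ((n : ℂ) * Real.pi) = 0 := Complex.sin_nat_mul_pi n
  have hc : cos ((n : ℂ) * Real.pi) = (-1) ^ n := by
    exact_mod_cast congrArg ofReal (Real.cos_nat_mul_pi n)
  rw [norm_div, Complex.sin_add, Complex.cos_add, hs, hc, zero_mul, zero_mul, zero_add, sub_zero,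
    Complex.sin_mul_I, Complex.cos_mul_I, ← ofReal_sinh, ← ofReal_cosh]
  simp only [norm_mul, norm_pow, norm_neg, norm_one, one_pow, one_mul, norm_I, mul_one,
    norm_real, Real.norm_eq_abs]
  refine div_le_one_of_le₀ ?_ (abs_nonneg _)
  rw [← sq_le_sq]
  linarith [Real.cosh_sq y]

/-- Pointwise bound for the integrand on the line `re s = -(2 * M + 1)`. -/
lemma norm_riemannZeta_ratio_mul_cpow_div_pow_le (k : ℕ) (hk : 2 ≤ k) (x : ℝ) (hx : 1 ≤ x)
    (M : ℕ) (t : ℝ) {s : ℂ} (hs : s = -(2 * (M : ℂ) + 1) + t * I) :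
    ‖riemannZeta (s - 1) / riemannZeta s * (x : ℂ) ^ s / s ^ k‖ ≤ 12 / (2 * (M : ℝ) + 1) := by
  have hM : (0 : ℝ) ≤ M := M.cast_nonneg
  have hre : s.re = -(2 * (M : ℝ) + 1) := by simp [hs]
  have hnorm : 2 * (M : ℝ) + 1 ≤ ‖s‖ := by
    have := abs_re_le_norm s
    rwa [hre, abs_neg, abs_of_nonneg (by linarith)] at this
  have hwre : (1 - s).re = 2 * (M : ℝ) + 2 := by rw [sub_re, one_re, hre]; ring
  have hratio := riemannZeta_neg_div_riemannZeta_one_sub (w := 1 - s) (by rw [hwre]; linarith)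
  rw [show -(1 - s) = s - 1 by ring, sub_sub_cancel] at hratio
  have htan : ‖sin (Real.pi * (1 - s) / 2) / cos (Real.pi * (1 - s) / 2)‖ ≤ 1 := by
    convert norm_sin_div_cos_nat_mul_pi_add_mul_I_le_one (M + 1) (-(Real.pi * t / 2)) using 4 <;>
    · rw [hs]; push_cast; ring
  have hnum : ‖riemannZeta (1 - s + 1)‖ ≤ 17 / 10 := by
    have h := norm_riemannZeta_sub_one_le (w := 1 - s + 1)
      (by rw [add_re, hwre, one_re]; linarith)
    have := norm_sub_norm_le (riemannZeta (1 - s + 1)) 1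
    rw [norm_one] at this
    linarith
  have hden : 3 / 10 ≤ ‖riemannZeta (1 - s)‖ := by
    have h := norm_riemannZeta_sub_one_le (w := 1 - s) (by rw [hwre]; linarith)
    have := norm_sub_norm_le 1 (riemannZeta (1 - s))
    rw [norm_one, norm_sub_rev] at this
    linarith
  have hquot : ‖riemannZeta (1 - s + 1) / riemannZeta (1 - s)‖ ≤ 6 := by
    rw [norm_div, div_le_iff₀ (by linarith)]
    linarith
  have hlin : ‖-((1 - s) / (2 * Real.pi : ℂ))‖ ≤ 2 * ‖s‖ := by
    have h1 : ‖1 - s‖ ≤ 1 + ‖s‖ := by simpa using norm_sub_le 1 s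
    have hpi : ‖(2 * Real.pi : ℂ)‖ = 2 * Real.pi := by
      simp [abs_of_pos Real.pi_pos]
    rw [norm_neg, norm_div, hpi]
    refine (div_le_self (norm_nonneg _) (by linarith [Real.pi_gt_three])).trans ?_
    linarith
  have hx1 : ‖(x : ℂ) ^ s‖ ≤ 1 := by
    rw [norm_cpow_eq_rpow_re_of_pos (by linarith), hre]
    exact Real.rpow_le_one_of_one_le_of_nonpos hx (by linarith)
  have hpow : ‖s‖ ^ 2 ≤ ‖s ^ k‖ := by
    rw [norm_pow]
    exact pow_le_pow_right₀ (by linarith) hk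
  have hs0 : 0 < ‖s‖ := by linarith
  rw [hratio, norm_div, norm_mul, norm_mul, norm_mul]
  calc _ ≤ 2 * ‖s‖ * 1 * 6 * 1 / ‖s‖ ^ 2 := by gcongr
    _ = 12 / ‖s‖ := by field_simp; norm_num
    _ ≤ _ := by gcongr

theorem left_segment_integral_tendsto_zero
    (k : ℕ) (hk : 2 ≤ k) (x T : ℝ) (hx : 2 ≤ x) (hT : 1 ≤ T) :
    Tendsto
      (fun M : ℕ =>
        I * ∫ t in (-T)..T,
          (fun s : ℂ => riemannZeta (s - 1) / riemannZeta s * (x : ℂ) ^ s / s ^ k)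
            (-(2 * (M : ℂ) + 1) + t * I))
      atTop (𝓝 0) := by
  have hlim : Tendsto (fun M : ℕ => 12 / (2 * (M : ℝ) + 1) * |T - -T|) atTop (𝓝 0) := by
    rw [← zero_mul |T - -T|]
    refine (Tendsto.div_atTop tendsto_const_nhds ?_).mul_const _
    exact tendsto_atTop_add_const_right _ _
      (tendsto_natCast_atTop_atTop.const_mul_atTop two_pos)
  refine squeeze_zero_norm (fun M => ?_) hlim
  rw [norm_mul, norm_I, one_mul]
  exact norm_integral_le_of_norm_le_const fun t _ =>
    norm_riemannZeta_ratio_mul_cpow_div_pow_le k hk x (by linarith) M t rfl
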